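/- arXiv:1503.05735 — 2 statements merged into one kernel-verified Lean document; each statement's English description precedes it below -/
import Mathlib

section
/- Let Q_n^(ℓ) be the generator of the symmetric exclusion process on the complete graph K_n with ℓ ≤ ⌊n/2⌋ black marbles and rate α > 0. Then for each j = 1, ..., ℓ, the number α·j·(n-j+1) is an eigenvalue of -Q_n^(ℓ) with multiplicity C(n,j) - C(n,j-1), and together with the eigenvalue 0 (multiplicity 1) these account for all eigenvalues of -Q_n^(ℓ) with multiplicity. -/
open Finset

/-- Swap the values of a configuration at two vertices. -/
def swapAt {V : Type*} [DecidableEq V] (x : V → Bool) (u v : V) : V → Bool :=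
  fun w => if w = u then x v else if w = v then x u else x w

/-- Number of black marbles (`true` coordinates) of a configuration. -/
def countB {V : Type*} [Fintype V] (x : V → Bool) : ℕ :=
  (Finset.univ.filter fun v => x v = true).card

/-- The negative generator `-Q` of the symmetric exclusion process on `G` with rate `α`:
`(-Qf)(x) = α Σ_{e ∈ E(G)} (f x - f x_e)`, written as half the sum over ordered adjacent pairs. -/
noncomputable def negGen {V : Type*} [Fintype V] [DecidableEq V] (G : SimpleGraph V) [DecidableRel G.Adj]
    (α : ℝ) (f : (V → Bool) → ℝ) (x : V → Bool) : ℝ :=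
  (α / 2) * ∑ u : V, ∑ v : V, if G.Adj u v then f x - f (swapAt x u v) else 0

/-- `ψ_+(x) = Σ_{v : x(v)=0} ψ(x_v)`, adding a black marble at `v`. -/
def plusOp {V : Type*} [Fintype V] [DecidableEq V] (ψ : (V → Bool) → ℝ) (x : V → Bool) : ℝ :=
  ∑ v ∈ Finset.univ.filter (fun v => x v = false), ψ (Function.update x v true)

/-- `ψ_-(x) = Σ_{v : x(v)=1} ψ(x_v)`, removing the black marble at `v`. -/
def minusOp {V : Type*} [Fintype V] [DecidableEq V] (ψ : (V → Bool) → ℝ) (x : V → Bool) : ℝ :=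
  ∑ v ∈ Finset.univ.filter (fun v => x v = true), ψ (Function.update x v false)

/-- Inner product at level `ℓ` with respect to the uniform measure on `ℓ`-subsets. -/
noncomputable def innerL {V : Type*} [Fintype V] [DecidableEq V] (ℓ : ℕ) (f g : (V → Bool) → ℝ) : ℝ :=
  (((Fintype.card V).choose ℓ : ℝ))⁻¹ *
    ∑ x ∈ Finset.univ.filter (fun x : V → Bool => countB x = ℓ), f x * g x

/-- Inner product on the full configuration space with respect to the uniform measure. -/
noncomputable def innerF {V : Type*} [Fintype V] [DecidableEq V] (f g : (V → Bool) → ℝ) : ℝ :=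
  ((2 : ℝ) ^ (Fintype.card V))⁻¹ * ∑ x : V → Bool, f x * g x


section aux
variable {n : ℕ}

/-- The hopping part of the generator. -/
noncomputable def hopOp (f : (Fin n → Bool) → ℝ) (x : Fin n → Bool) : ℝ :=
  ∑ u : Fin n, ∑ v : Fin n, if x u = true ∧ x v = false then f (swapAt x u v) else 0

lemma sum_true (x : Fin n → Bool) (c : ℝ) :
    (∑ v : Fin n, if x v = true then c else 0) = (countB x : ℝ) * c := by
  rw [← Finset.sum_filter]; simp [countB]

lemma sum_false (x : Fin n → Bool) (c : ℝ) :
    (∑ v : Fin n, if x v = false then c else 0) = ((n : ℝ) - countB x) * c := by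
  have h : ∀ v : Fin n, (if x v = false then c else 0) = c - (if x v = true then c else 0) := by
    intro v; cases x v <;> simp
  simp only [h, Finset.sum_sub_distrib, sum_true]
  simp; ring

lemma swapAt_symm (x : Fin n → Bool) (u v : Fin n) : swapAt x u v = swapAt x v u := by
  funext w; unfold swapAt; split_ifs with h1 h2 <;> simp_all

lemma swapAt_same (x : Fin n → Bool) (u v : Fin n) (h : x u = x v) : swapAt x u v = x := by
  funext w; unfold swapAt; split_ifs with h1 h2 <;> simp_all

lemma minus_plus (f : (Fin n → Bool) → ℝ) (x : Fin n → Bool) :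
    minusOp (plusOp f) x = countB x * f x + hopOp f x := by
  unfold minusOp plusOp hopOp
  rw [← sum_true, ← Finset.sum_add_distrib, Finset.sum_filter]
  refine Finset.sum_congr rfl fun v _ => ?_
  by_cases hv : x v = true
  · simp only [hv, if_true, true_and]
    rw [Finset.sum_filter]
    have : f x = ∑ w : Fin n, if w = v then f x else 0 := by simp
    rw [this, ← Finset.sum_add_distrib]
    refine Finset.sum_congr rfl fun w _ => ?_
    by_cases hw : w = v
    · subst hw
      simp [hv]
      congr 1
      rw [← hv, Function.update_eq_self]
    · simp only [hw, if_false, zero_add, Function.update_of_ne (Ne.intro hw)]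
      by_cases hx : x w = false
      · simp only [hx, if_true]
        congr 1
        funext z
        unfold swapAt Function.update
        by_cases h1 : z = w
        · subst h1; simp [hw, hv]
        · by_cases h2 : z = v <;> simp [h1, h2, hx]
          intro h; exact absurd h.symm hw
      · simp [hx]
  · simp [hv]

lemma plus_minus (f : (Fin n → Bool) → ℝ) (x : Fin n → Bool) :
    plusOp (minusOp f) x = ((n : ℝ) - countB x) * f x + hopOp f x := by
  unfold minusOp plusOp hopOp
  rw [← sum_false, Finset.sum_comm, ← Finset.sum_add_distrib, Finset.sum_filter]
  refine Finset.sum_congr rfl fun v _ => ?_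
  by_cases hv : x v = false
  · simp only [hv, if_true, and_true]
    rw [Finset.sum_filter]
    have : f x = ∑ w : Fin n, if w = v then f x else 0 := by simp
    rw [this, ← Finset.sum_add_distrib]
    refine Finset.sum_congr rfl fun w _ => ?_
    by_cases hw : w = v
    · subst hw
      simp [hv]
      congr 1
      rw [← hv, Function.update_eq_self]
    · simp only [hw, if_false, zero_add, Function.update_of_ne (Ne.intro hw)]
      by_cases hx : x w = true
      · simp only [hx, if_true]
        congr 1
        funext z
        unfold swapAt Function.update
        by_cases h1 : z = w
        · subst h1; simp [hv]
        · by_cases h2 : z = v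
          · subst h2; simp [h1, hx]
          · simp [h1, h2]
      · simp [hx]
  · simp [hv]

lemma negGen_eq (α : ℝ) (f : (Fin n → Bool) → ℝ) (x : Fin n → Bool) :
    negGen (⊤ : SimpleGraph (Fin n)) α f x =
      α * (countB x * ((n : ℝ) - countB x) * f x - hopOp f x) := by
  have key : ∀ u v : Fin n, (if (⊤ : SimpleGraph (Fin n)).Adj u v then f x - f (swapAt x u v) else 0)
      = (if x u = true then (if x v = false then f x else 0) else 0)
        - (if x u = true ∧ x v = false then f (swapAt x u v) else 0)
        + ((if x v = true then (if x u = false then f x else 0) else 0)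
        - (if x v = true ∧ x u = false then f (swapAt x v u) else 0)) := by
    intro u v
    rw [swapAt_symm x v u]
    by_cases h : x u = x v
    · rw [swapAt_same x u v h, h]; cases x v <;> simp
    · have : u ≠ v := fun e => h (by rw [e])
      cases hu : x u <;> cases hv : x v <;> simp_all
  have e1 : (∑ u : Fin n, ∑ v : Fin n, (if x u = true then (if x v = false then f x else 0) else 0))
      = countB x * (((n : ℝ) - countB x) * f x) := by
    rw [← sum_true]
    refine Finset.sum_congr rfl fun u _ => ?_
    split_ifs
    · exact sum_false x _
    · simp
  unfold negGen
  simp only [key, Finset.sum_add_distrib, Finset.sum_sub_distrib]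
  rw [e1, Finset.sum_comm (f := fun u v => if x v = true then (if x u = false then f x else 0) else 0), e1,
    Finset.sum_comm (f := fun u v => if x v = true ∧ x u = false then f (swapAt x v u) else 0)]
  unfold hopOp
  ring

lemma adj_op (f g : (Fin n → Bool) → ℝ) :
    ∑ x, minusOp f x * g x = ∑ x, f x * plusOp g x := by
  unfold minusOp plusOp
  simp only [Finset.sum_filter, Finset.sum_mul, Finset.mul_sum]
  rw [Finset.sum_comm, Finset.sum_comm (s := univ (α := Fin n → Bool))]
  refine Finset.sum_congr rfl fun v _ => ?_
  simp only [ite_mul, mul_ite, zero_mul, mul_zero]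
  rw [← Finset.sum_filter, ← Finset.sum_filter]
  refine Finset.sum_bij' (fun x _ => Function.update x v false) (fun x _ => Function.update x v true)
    ?_ ?_ ?_ ?_ ?_
  · intro x hx; simp
  · intro x hx; simp
  · intro x hx
    simp only [Finset.mem_filter, Finset.mem_univ, true_and] at hx
    rw [Function.update_idem, ← hx, Function.update_eq_self]
  · intro x hx
    simp only [Finset.mem_filter, Finset.mem_univ, true_and] at hx
    rw [Function.update_idem, ← hx, Function.update_eq_self]
  · intro x hx
    simp only [Finset.mem_filter, Finset.mem_univ, true_and] at hx
    rw [Function.update_idem, ← hx, Function.update_eq_self]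

lemma countB_update_true (x : Fin n → Bool) (v : Fin n) (h : x v = false) :
    countB (Function.update x v true) = countB x + 1 := by
  unfold countB
  rw [← Finset.card_insert_of_notMem (a := v) (s := univ.filter fun v => x v = true) (by simp [h])]
  congr 1
  ext w
  by_cases hw : w = v
  · subst hw; simp
  · simp [hw]

lemma countB_update_false (x : Fin n → Bool) (v : Fin n) (h : x v = true) :
    countB (Function.update x v false) + 1 = countB x := by
  have := countB_update_true (Function.update x v false) v (by simp)
  rw [Function.update_idem, ← h, Function.update_eq_self] at this
  exact this.symm

/-- Functions supported on level `ℓ`. -/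
def lev (n ℓ : ℕ) : Submodule ℝ (EuclideanSpace ℝ (Fin n → Bool)) where
  carrier := {f | ∀ x, countB x ≠ ℓ → f x = 0}
  add_mem' := by intro a b ha hb x hx; simp [ha x hx, hb x hx]
  zero_mem' := by intro x hx; simp
  smul_mem' := by intro c a ha x hx; simp [ha x hx]

lemma card_level (n ℓ : ℕ) : Fintype.card {x : Fin n → Bool // countB x = ℓ} = n.choose ℓ := by
  rw [Fintype.card_subtype]
  have : n.choose ℓ = (Finset.powersetCard ℓ (univ : Finset (Fin n))).card := by simp
  rw [this]
  refine Finset.card_bij' (fun x _ => univ.filter fun v => x v = true) (fun s _ v => decide (v ∈ s))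
    ?_ ?_ ?_ ?_
  · intro x hx
    rw [Finset.mem_filter] at hx
    rw [Finset.mem_powersetCard]
    exact ⟨Finset.subset_univ _, hx.2⟩
  · intro x hx
    rw [Finset.mem_powersetCard] at hx
    rw [Finset.mem_filter]
    refine ⟨Finset.mem_univ _, ?_⟩
    unfold countB
    simpa using hx.2
  · intro x hx; simp
  · intro x hx; simp

lemma finrank_lev (n ℓ : ℕ) : Module.finrank ℝ (lev n ℓ) = n.choose ℓ := by
  let e : lev n ℓ ≃ₗ[ℝ] ({x : Fin n → Bool // countB x = ℓ} → ℝ) :=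
    { toFun := fun f x => f.1 x.1
      map_add' := by intro f g; rfl
      map_smul' := by intro f g; rfl
      invFun := fun g => ⟨WithLp.toLp 2 (fun x => if h : countB x = ℓ then g ⟨x, h⟩ else 0), by
        intro x hx; simp [hx]⟩
      left_inv := by
        intro f
        ext x
        by_cases h : countB x = ℓ
        · simp [h]
        · simp [h, f.2 x h]
      right_inv := by
        intro g
        ext x
        simp [x.2] }
  rw [e.finrank_eq, Module.finrank_fintype_fun_eq_card, card_level]

/-- `minusOp` on the Euclidean space. -/
noncomputable def mOp (f : EuclideanSpace ℝ (Fin n → Bool)) : EuclideanSpace ℝ (Fin n → Bool) :=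
  WithLp.toLp 2 (minusOp f)

/-- `plusOp` on the Euclidean space. -/
noncomputable def pOp (f : EuclideanSpace ℝ (Fin n → Bool)) : EuclideanSpace ℝ (Fin n → Bool) :=
  WithLp.toLp 2 (plusOp f)

lemma mOp_lev {ℓ : ℕ} (f : EuclideanSpace ℝ (Fin n → Bool)) (hf : f ∈ lev n ℓ) :
    mOp f ∈ lev n (ℓ + 1) := by
  intro x hx
  change minusOp f x = 0
  refine Finset.sum_eq_zero fun v hv => hf _ ?_
  have := countB_update_false x v (by simpa using hv)
  omega

lemma pOp_lev {ℓ : ℕ} (f : EuclideanSpace ℝ (Fin n → Bool)) (hf : f ∈ lev n (ℓ + 1)) :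
    pOp f ∈ lev n ℓ := by
  intro x hx
  change plusOp f x = 0
  refine Finset.sum_eq_zero fun v hv => hf _ ?_
  have := countB_update_true x v (by simpa using hv)
  omega

lemma mOp_smul (c : ℝ) (f : EuclideanSpace ℝ (Fin n → Bool)) : mOp (c • f) = c • mOp f := by
  ext x; simp [mOp, minusOp, Finset.mul_sum]

lemma pOp_smul (c : ℝ) (f : EuclideanSpace ℝ (Fin n → Bool)) : pOp (c • f) = c • pOp f := by
  ext x; simp [pOp, plusOp, Finset.mul_sum]

lemma inner_eq (f g : EuclideanSpace ℝ (Fin n → Bool)) : inner ℝ f g = ∑ x, f x * g x := by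
  simp [PiLp.inner_apply, mul_comm]

lemma inner_mOp (f g : EuclideanSpace ℝ (Fin n → Bool)) :
    inner ℝ (mOp f) g = inner ℝ f (pOp g) := by
  rw [inner_eq, inner_eq]; exact adj_op f g

lemma pm_comm {ℓ : ℕ} (f : EuclideanSpace ℝ (Fin n → Bool)) (hf : f ∈ lev n ℓ) :
    pOp (mOp f) = mOp (pOp f) + ((n : ℝ) - 2 * ℓ) • f := by
  ext x
  have h1 := plus_minus f x
  have h2 := minus_plus f x
  change plusOp (minusOp f) x = minusOp (plusOp f) x + ((n : ℝ) - 2 * ℓ) * f x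
  by_cases h : countB x = ℓ
  · rw [h1, h2, h]; ring
  · have := hf x h
    rw [h1, h2, this]; ring

/-- Eigenvalue bookkeeping: `mOp (pOp f) = (ℓ(n-ℓ+1) - d(n-d+1)) f`. -/
def ev (n d : ℕ) : ℝ := d * ((n : ℝ) - d + 1)

lemma ev_lt {n a b : ℕ} (hab : a < b) (hb : 2 * b ≤ n) : ev n a < ev n b := by
  unfold ev
  have h1 : (a : ℝ) + 1 ≤ b := by exact_mod_cast hab
  have h2 : 2 * (b : ℝ) ≤ n := by exact_mod_cast hb
  nlinarith

lemma card_elim {ι κ : Type} [Fintype ι] [Fintype κ] (f : ι → ℕ) (g : κ → ℕ) (j : ℕ) :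
    Fintype.card {s : ι ⊕ κ // Sum.elim f g s = j} =
      Fintype.card {i // f i = j} + Fintype.card {i // g i = j} := by
  rw [← Fintype.card_sum]
  exact Fintype.card_congr (Equiv.subtypeSum)

lemma main_ind (n ℓ : ℕ) (hℓ : 2 * ℓ ≤ n) :
    ∃ (ι : Type) (_ : Fintype ι) (b : ι → EuclideanSpace ℝ (Fin n → Bool)) (d : ι → ℕ),
      Orthonormal ℝ b ∧ (∀ i, b i ∈ lev n ℓ) ∧ Fintype.card ι = n.choose ℓ ∧
      (∀ i, d i ≤ ℓ) ∧ (∀ i, mOp (pOp (b i)) = (ev n ℓ - ev n (d i)) • b i) ∧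
      Fintype.card {i // d i = 0} = 1 ∧
      ∀ j ∈ Finset.Icc 1 ℓ, Fintype.card {i // d i = j} = n.choose j - n.choose (j - 1) := by
  induction ℓ with
  | zero =>
    refine ⟨Fin (Module.finrank ℝ (lev n 0)), inferInstance,
      fun i => (stdOrthonormalBasis ℝ (lev n 0) i : EuclideanSpace ℝ (Fin n → Bool)), fun _ => 0, ?_, ?_, ?_, ?_, ?_, ?_, ?_⟩
    · exact (stdOrthonormalBasis ℝ (lev n 0)).orthonormal.comp_linearIsometry (lev n 0).subtypeₗᵢ
    · intro i; exact (stdOrthonormalBasis ℝ (lev n 0) i).2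
    · simp [finrank_lev]
    · simp
    · intro i
      ext x
      simp only [sub_self, zero_smul]
      change minusOp (plusOp (stdOrthonormalBasis ℝ (lev n 0) i : EuclideanSpace ℝ (Fin n → Bool))) x = 0
      refine Finset.sum_eq_zero fun v hv => Finset.sum_eq_zero fun w hw => ?_
      refine (stdOrthonormalBasis ℝ (lev n 0) i).2 _ ?_
      have := countB_update_true (Function.update x v false) w (by simpa using hw)
      omega
    · simp [finrank_lev]
    · simp
  | succ ℓ ih =>
    obtain ⟨ι, _, b, d, hon, hlev, hcard, hd, hev, hd0, hdj⟩ := ih (by omega)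
    set c : ι → ℝ := fun i => ev n (ℓ + 1) - ev n (d i) with hc
    have hcpos : ∀ i, 0 < c i := fun i => by
      have := ev_lt (n := n) (a := d i) (b := ℓ + 1) (by have := hd i; omega) hℓ
      simp only [hc]; linarith
    have hpm : ∀ i, pOp (mOp (b i)) = c i • b i := by
      intro i
      rw [pm_comm _ (hlev i), hev, ← add_smul]
      congr 1
      simp only [hc, ev]; push_cast; ring
    set φ : ι → EuclideanSpace ℝ (Fin n → Bool) := fun i => (Real.sqrt (c i))⁻¹ • mOp (b i) with hφ
    have hφon : Orthonormal ℝ φ := by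
      classical
      rw [orthonormal_iff_ite] at hon ⊢
      intro i j
      simp only [hφ, inner_smul_left, inner_smul_right, inner_mOp, hpm, hon i j]
      split_ifs with h
      · subst h
        have h1 := Real.mul_self_sqrt (hcpos i).le
        have h2 := (Real.sqrt_pos.2 (hcpos i)).ne'
        simp
        field_simp
        nlinarith
      · simp
    have hφlev : ∀ i, φ i ∈ lev n (ℓ + 1) := fun i => Submodule.smul_mem _ _ (mOp_lev _ (hlev i))
    set K := Submodule.span ℝ (Set.range φ) with hK
    have hKle : K ≤ lev n (ℓ + 1) := by
      rw [hK, Submodule.span_le]; rintro _ ⟨i, rfl⟩; exact hφlev i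
    have hspan : Submodule.span ℝ (Set.range b) = lev n ℓ := by
      refine Submodule.eq_of_le_of_finrank_eq ?_ ?_
      · rw [Submodule.span_le]; rintro _ ⟨i, rfl⟩; exact hlev i
      · rw [finrank_span_eq_card hon.linearIndependent, hcard, finrank_lev]
    set W := Kᗮ ⊓ lev n (ℓ + 1) with hW
    have hfr : n.choose ℓ + Module.finrank ℝ W = n.choose (ℓ + 1) := by
      have := Submodule.finrank_add_inf_finrank_orthogonal hKle
      rwa [finrank_span_eq_card hφon.linearIndependent, hcard, finrank_lev] at this
    have hWφ : ∀ w ∈ W, ∀ i, inner ℝ (φ i) w = 0 := fun w hw i =>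
      hw.1 (φ i) (Submodule.subset_span ⟨i, rfl⟩)
    have hWp : ∀ w ∈ W, pOp w = 0 := by
      intro w hw
      have hp := pOp_lev w hw.2
      have h0 : ∀ i, inner ℝ (b i) (pOp w) = 0 := by
        intro i
        have h := hWφ w hw i
        simp only [hφ, inner_smul_left, inner_mOp] at h
        have h2 := (Real.sqrt_pos.2 (hcpos i)).ne'
        simpa [h2] using h
      have h1 : pOp w ∈ (Submodule.span ℝ (Set.range b))ᗮ := by
        rw [Submodule.mem_orthogonal]
        intro u hu
        induction hu using Submodule.span_induction with
        | mem x hx => obtain ⟨i, rfl⟩ := hx; exact h0 i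
        | zero => simp
        | add x y _ _ hx hy => rw [inner_add_left, hx, hy, add_zero]
        | smul a x _ hx => rw [inner_smul_left, hx, mul_zero]
      rw [hspan] at h1
      exact inner_self_eq_zero.1 (h1 _ hp)
    let e := stdOrthonormalBasis ℝ W
    have heon : Orthonormal ℝ (fun i => (e i : EuclideanSpace ℝ (Fin n → Bool))) :=
      e.orthonormal.comp_linearIsometry W.subtypeₗᵢ
    refine ⟨ι ⊕ Fin (Module.finrank ℝ W), inferInstance, Sum.elim φ (fun i => (e i : EuclideanSpace ℝ (Fin n → Bool))),
      Sum.elim d (fun _ => ℓ + 1), ?_, ?_, ?_, ?_, ?_, ?_, ?_⟩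
    · refine ⟨?_, ?_⟩
      · rintro (i | i)
        · exact hφon.1 i
        · exact heon.1 i
      · rintro (i | i) (j | j) hij
        · exact hφon.2 (fun h => hij (by rw [h]))
        · exact hWφ _ (e j).2 i
        · simp only [Sum.elim_inl, Sum.elim_inr]
          rw [real_inner_comm]; exact hWφ _ (e i).2 j
        · exact heon.2 (fun h => hij (by rw [h]))
    · rintro (i | i)
      · exact hφlev i
      · exact (e i).2.2
    · simp [hcard, hfr]
    · rintro (i | i)
      · have := hd i
        simp only [Sum.elim_inl]; omega
      · simp
    · rintro (i | i)
      · simp only [Sum.elim_inl, hφ]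
        rw [pOp_smul, hpm, mOp_smul, mOp_smul, smul_comm]
      · simp only [Sum.elim_inr, sub_self, zero_smul]
        rw [hWp _ (e i).2]
        ext x
        simp [mOp, minusOp]
    · rw [card_elim, hd0]
      simp
    · intro j hj
      rw [card_elim]
      simp only [Finset.mem_Icc] at hj
      by_cases hjl : j = ℓ + 1
      · subst hjl
        have : IsEmpty {i // d i = ℓ + 1} := ⟨fun i => by have := hd i.1; have := i.2; omega⟩
        simp
        omega
      · rw [hdj j (by simp; omega)]
        have : IsEmpty {i : Fin (Module.finrank ℝ W) // ℓ + 1 = j} := ⟨fun i => hjl i.2.symm⟩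
        simp

end aux

/-- Spectrum of the exclusion generator on K_n with ℓ ≤ ⌊n/2⌋ black marbles:
there is an orthonormal eigenbasis in which 0 has multiplicity 1, each value
α·j·(n-j+1) (1 ≤ j ≤ ℓ) has multiplicity C(n,j) - C(n,j-1), and every
eigenvalue is of one of these forms. -/
theorem complete_graph_spectrum (n : ℕ) (hn : 1 ≤ n) (ℓ : ℕ) (hℓ : 2 * ℓ ≤ n)
    (α : ℝ) (hα : 0 < α) :
    ∃ (ψ : Fin (n.choose ℓ) → (Fin n → Bool) → ℝ) (mu : Fin (n.choose ℓ) → ℝ),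
      (∀ i, ∀ x, countB x = ℓ →
        negGen (⊤ : SimpleGraph (Fin n)) α (ψ i) x = mu i * ψ i x) ∧
      (∀ i j, innerL ℓ (ψ i) (ψ j) = if i = j then 1 else 0) ∧
      (Finset.univ.filter (fun i => mu i = 0)).card = 1 ∧
      (∀ j ∈ Finset.Icc 1 ℓ,
        (Finset.univ.filter
          (fun i => mu i = α * j * ((n : ℝ) - j + 1))).card
            = n.choose j - n.choose (j - 1)) ∧
      (∀ i, mu i = 0 ∨ ∃ j ∈ Finset.Icc 1 ℓ, mu i = α * j * ((n : ℝ) - j + 1)) := by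
  obtain ⟨ι, _, b, d, hon, hlev, hcard, hd, hev, hd0, hdj⟩ := main_ind n ℓ hℓ
  let e : Fin (n.choose ℓ) ≃ ι := (Fintype.equivFinOfCardEq hcard).symm
  have hinj : ∀ i, ∀ j ≤ ℓ, (α * ev n (d i) = α * j * ((n : ℝ) - j + 1) ↔ d i = j) := by
    intro i j hj
    have h0 : α * j * ((n : ℝ) - j + 1) = α * ev n j := by unfold ev; ring
    rw [h0]
    constructor
    · intro h
      have h := mul_left_cancel₀ hα.ne' h
      rcases lt_trichotomy (d i) j with h1 | h1 | h1
      · exact absurd h (ev_lt h1 (by omega)).ne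
      · exact h1
      · exact absurd h (ev_lt h1 (by have := hd i; omega)).ne'
    · intro h; rw [h]
  have hcnt : ∀ j ≤ ℓ, (Finset.univ.filter
          (fun i => α * ev n (d (e i)) = α * j * ((n : ℝ) - j + 1))).card
      = Fintype.card {i // d i = j} := by
    intro j hj
    rw [← Fintype.card_subtype]
    exact Fintype.card_congr (e.subtypeEquiv fun i => hinj (e i) j hj)
  have hCpos : (0 : ℝ) < n.choose ℓ := by exact_mod_cast Nat.choose_pos (by omega)
  refine ⟨fun i x => Real.sqrt (n.choose ℓ) * b (e i) x, fun i => α * ev n (d (e i)),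
    ?_, ?_, ?_, ?_, ?_⟩
  · intro i x hx
    have h1 := minus_plus (b (e i)) x
    have h2 : minusOp (plusOp (b (e i))) x = (ev n ℓ - ev n (d (e i))) * b (e i) x :=
      congrArg (fun f : EuclideanSpace ℝ (Fin n → Bool) => f x) (hev (e i))
    have h3 : hopOp (fun x => Real.sqrt (n.choose ℓ) * b (e i) x) x
        = Real.sqrt (n.choose ℓ) * hopOp (b (e i)) x := by
      simp only [hopOp, Finset.mul_sum, mul_ite, mul_zero]
    rw [negGen_eq, h3, hx]
    have h4 : hopOp (b (e i)) x = (ev n ℓ - ev n (d (e i))) * b (e i) x - ℓ * b (e i) x := by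
      rw [← h2, h1, hx]; ring
    rw [h4]
    unfold ev
    ring
  · intro i j
    have h := (orthonormal_iff_ite.1 (hon.comp e e.injective)) i j
    rw [← h]
    simp only [Function.comp]
    rw [inner_eq]
    unfold innerL
    rw [Finset.sum_filter, Fintype.card_fin, Finset.mul_sum]
    refine Finset.sum_congr rfl fun x _ => ?_
    split_ifs with hx
    · have h1 := Real.mul_self_sqrt hCpos.le
      have h5 : Real.sqrt (n.choose ℓ) * b (e i) x * (Real.sqrt (n.choose ℓ) * b (e j) x)
        = (n.choose ℓ : ℝ) * (b (e i) x * b (e j) x) := by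
        rw [mul_mul_mul_comm, h1]
      rw [h5, inv_mul_cancel_left₀ hCpos.ne']
    · rw [hlev (e i) x hx]; simp
  · have := hcnt 0 (Nat.zero_le _)
    rw [hd0] at this
    simpa using this
  · intro j hj
    rw [← hdj j hj]
    exact hcnt j (Finset.mem_Icc.1 hj).2
  · intro i
    have h := hd (e i)
    rcases Nat.eq_zero_or_pos (d (e i)) with h0 | h0
    · left; simp [h0, ev]
    · right
      exact ⟨d (e i), Finset.mem_Icc.2 ⟨h0, h⟩, (hinj _ _ h).2 rfl⟩
end

section
/- Let Q and Q' be the negative-definite-ordered generators of symmetric exclusion processes with the same rate α on finite connected graphs G and G' on the same vertex set with E(G') ⊆ E(G). Let {ψ_j} be an orthonormal eigenbasis of -Q with eigenvalues {λ_j}, and {χ_j} an orthonormal eigenbasis of -Q' with eigenvalues {μ_j}, with respect to the uniform measure on {0,1}^{V(G)}; assume the kernel of Q equals the kernel of Q' (as subspaces). Then for any f : {0,1}^{V(G)} → ℝ and any k, k' > 0: Σ_{j : μ_j > k'} ⟨f, χ_j⟩² ≤ ( sqrt( (k/k') · Σ_{j : 0 < λ_j ≤ k} ⟨f, ψ_j⟩²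 ) + sqrt( Σ_{j : λ_j > k} ⟨f, ψ_j⟩² ) )². -/
open Finset

theorem mi_swap_invol {V : Type*} [DecidableEq V] (u v : V) :
    Function.Involutive (fun x : V → Bool => swapAt x u v) := by
  intro x
  funext w
  simp only [swapAt]
  split_ifs <;> simp_all

theorem mi_dir_edge {V : Type*} [Fintype V] [DecidableEq V] (u v : V)
    (g : (V → Bool) → ℝ) :
    ∑ x, (g x - g (swapAt x u v)) * g x = (1 / 2) * ∑ x, (g x - g (swapAt x u v)) ^ 2 := by
  have h : ∑ x : V → Bool, g (swapAt x u v) ^ 2 = ∑ x, g x ^ 2 :=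
    Equiv.sum_comp (mi_swap_invol u v).toPerm (fun x => g x ^ 2)
  have e1 : ∑ x, (g x - g (swapAt x u v)) ^ 2
      = 2 * ∑ x, (g x - g (swapAt x u v)) * g x
        + (∑ x, g (swapAt x u v) ^ 2 - ∑ x, g x ^ 2) := by
    rw [Finset.mul_sum, ← Finset.sum_sub_distrib, ← Finset.sum_add_distrib]
    exact Finset.sum_congr rfl fun x _ => by ring
  rw [e1, h]; ring

theorem mi_dirichlet {V : Type*} [Fintype V] [DecidableEq V]
    (G : SimpleGraph V) [DecidableRel G.Adj] (α : ℝ) (g : (V → Bool) → ℝ) :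
    innerF (negGen G α g) g = ((2 : ℝ) ^ (Fintype.card V))⁻¹ * ((α / 2) *
      ∑ u : V, ∑ v : V, if G.Adj u v then
        (1 / 2) * ∑ x, (g x - g (swapAt x u v)) ^ 2 else 0) := by
  unfold innerF negGen
  congr 1
  simp_rw [mul_assoc]
  rw [← Finset.mul_sum]
  congr 1
  simp_rw [Finset.sum_mul]
  rw [Finset.sum_comm]
  refine Finset.sum_congr rfl fun u _ => ?_
  rw [Finset.sum_comm]
  refine Finset.sum_congr rfl fun v _ => ?_
  split_ifs with h
  · exact mi_dir_edge u v g
  · simp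

theorem mi_dir_nonneg {V : Type*} [Fintype V] [DecidableEq V]
    (G : SimpleGraph V) [DecidableRel G.Adj] (α : ℝ) (hα : 0 < α) (g : (V → Bool) → ℝ) :
    0 ≤ innerF (negGen G α g) g := by
  rw [mi_dirichlet]
  refine mul_nonneg (by positivity) (mul_nonneg (by positivity) ?_)
  refine Finset.sum_nonneg fun u _ => Finset.sum_nonneg fun v _ => ?_
  split_ifs <;> positivity

theorem mi_dir_mono {V : Type*} [Fintype V] [DecidableEq V]
    (G G' : SimpleGraph V) [DecidableRel G.Adj] [DecidableRel G'.Adj]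
    (hsub : ∀ u v, G'.Adj u v → G.Adj u v)
    (α : ℝ) (hα : 0 < α) (g : (V → Bool) → ℝ) :
    innerF (negGen G' α g) g ≤ innerF (negGen G α g) g := by
  rw [mi_dirichlet, mi_dirichlet]
  refine mul_le_mul_of_nonneg_left (mul_le_mul_of_nonneg_left ?_ (by positivity)) (by positivity)
  refine Finset.sum_le_sum fun u _ => Finset.sum_le_sum fun v _ => ?_
  by_cases h : G'.Adj u v
  · rw [if_pos h, if_pos (hsub u v h)]
  · rw [if_neg h]
    split_ifs <;> positivity

theorem mi_innerF_sum_left {V ι : Type*} [Fintype V] [DecidableEq V] (s : Finset ι)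
    (c : ι → ℝ) (φ : ι → (V → Bool) → ℝ) (g : (V → Bool) → ℝ) :
    innerF (fun x => ∑ j ∈ s, c j * φ j x) g = ∑ j ∈ s, c j * innerF (φ j) g := by
  unfold innerF
  simp_rw [Finset.sum_mul, Finset.mul_sum]
  rw [Finset.sum_comm]
  exact Finset.sum_congr rfl fun j _ => Finset.sum_congr rfl fun x _ => by ring

theorem mi_innerF_comm {V : Type*} [Fintype V] [DecidableEq V] (f g : (V → Bool) → ℝ) :
    innerF f g = innerF g f := by
  unfold innerF
  simp_rw [mul_comm]

theorem mi_negGen_sum {V ι : Type*} [Fintype V] [DecidableEq V]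
    (G : SimpleGraph V) [DecidableRel G.Adj] (α : ℝ) (s : Finset ι)
    (c : ι → ℝ) (φ : ι → (V → Bool) → ℝ) (x : V → Bool) :
    negGen G α (fun x => ∑ j ∈ s, c j * φ j x) x = ∑ j ∈ s, c j * negGen G α (φ j) x := by
  unfold negGen
  simp_rw [mul_left_comm _ (α / 2)]
  rw [← Finset.mul_sum]
  congr 1
  simp_rw [Finset.mul_sum]
  rw [Finset.sum_comm (s := s)]
  refine Finset.sum_congr rfl fun u _ => ?_
  rw [Finset.sum_comm (s := s)]
  refine Finset.sum_congr rfl fun v _ => ?_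
  split_ifs
  · rw [← Finset.sum_sub_distrib]
    exact Finset.sum_congr rfl fun j _ => by ring
  · simp

theorem mi_expand {V : Type*} [Fintype V] [DecidableEq V]
    (φ : (V → Bool) → (V → Bool) → ℝ)
    (h : ∀ i j, innerF (φ i) (φ j) = if i = j then 1 else 0)
    (f : (V → Bool) → ℝ) : f = fun x => ∑ j, innerF f (φ j) * φ j x := by
  let A : Matrix (V → Bool) (V → Bool) ℝ := Matrix.of φ
  let B : Matrix (V → Bool) (V → Bool) ℝ :=
    Matrix.of fun x j => ((2 : ℝ) ^ (Fintype.card V))⁻¹ * φ j x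
  have hAB : A * B = 1 := by
    ext i j
    rw [Matrix.mul_apply, Matrix.one_apply, ← h i j]
    simp only [A, B, Matrix.of_apply, innerF, Finset.mul_sum]
    exact Finset.sum_congr rfl fun x _ => by ring
  have hBA : B * A = 1 := mul_eq_one_comm.mp hAB
  funext x
  have hx : ∀ y, ∑ j, ((2 : ℝ) ^ (Fintype.card V))⁻¹ * φ j y * φ j x = if y = x then 1 else 0 := by
    intro y
    have := congrFun (congrFun hBA y) x
    rwa [Matrix.mul_apply, Matrix.one_apply] at this
  have : ∑ j, innerF f (φ j) * φ j x
      = ∑ y, f y * ∑ j, ((2 : ℝ) ^ (Fintype.card V))⁻¹ * φ j y * φ j x := by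
    simp only [innerF, Finset.mul_sum, Finset.sum_mul]
    rw [Finset.sum_comm]
    exact Finset.sum_congr rfl fun j _ => Finset.sum_congr rfl fun x _ => by ring
  rw [this]
  simp [hx]

theorem mi_parseval {V : Type*} [Fintype V] [DecidableEq V]
    (φ : (V → Bool) → (V → Bool) → ℝ)
    (h : ∀ i j, innerF (φ i) (φ j) = if i = j then 1 else 0)
    (f : (V → Bool) → ℝ) : innerF f f = ∑ j, innerF f (φ j) ^ 2 := by
  conv_lhs => arg 1; rw [mi_expand φ h f]
  rw [mi_innerF_sum_left]
  exact Finset.sum_congr rfl fun j _ => by rw [mi_innerF_comm (φ j) f]; ring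

theorem mi_energy {V : Type*} [Fintype V] [DecidableEq V]
    (G : SimpleGraph V) [DecidableRel G.Adj] (α : ℝ)
    (φ : (V → Bool) → (V → Bool) → ℝ) (lam : (V → Bool) → ℝ)
    (heig : ∀ j x, negGen G α (φ j) x = lam j * φ j x)
    (h : ∀ i j, innerF (φ i) (φ j) = if i = j then 1 else 0)
    (f : (V → Bool) → ℝ) :
    innerF (negGen G α f) f = ∑ j, lam j * innerF f (φ j) ^ 2 := by
  have e : negGen G α f = fun x => ∑ j, (innerF f (φ j) * lam j) * φ j x := by
    funext x
    conv_lhs => rw [mi_expand φ h f]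
    rw [mi_negGen_sum]
    exact Finset.sum_congr rfl fun j _ => by rw [heig]; ring
  rw [e, mi_innerF_sum_left]
  exact Finset.sum_congr rfl fun j _ => by rw [mi_innerF_comm (φ j) f]; ring

theorem mi_eig_nonneg {V : Type*} [Fintype V] [DecidableEq V]
    (G : SimpleGraph V) [DecidableRel G.Adj] (α : ℝ) (hα : 0 < α)
    (φ : (V → Bool) → (V → Bool) → ℝ) (lam : (V → Bool) → ℝ)
    (heig : ∀ j x, negGen G α (φ j) x = lam j * φ j x)
    (h : ∀ i j, innerF (φ i) (φ j) = if i = j then 1 else 0) (j : V → Bool) :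
    0 ≤ lam j := by
  have h0 := mi_dir_nonneg G α hα (φ j)
  rw [mi_energy G α φ lam heig h] at h0
  simpa [h] using h0

/-- Coefficients of a spectral truncation. -/
theorem mi_coeff {V : Type*} [Fintype V] [DecidableEq V]
    (φ : (V → Bool) → (V → Bool) → ℝ)
    (h : ∀ i j, innerF (φ i) (φ j) = if i = j then 1 else 0)
    (c : (V → Bool) → ℝ) (i : V → Bool) :
    innerF (fun x => ∑ j, c j * φ j x) (φ i) = c i := by
  rw [mi_innerF_sum_left]
  simp [h]

theorem mi_minkowski {ι : Type*} (s : Finset ι) (u v : ι → ℝ) (A B : ℝ)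
    (hA : ∑ j ∈ s, u j ^ 2 ≤ A) (hB : ∑ j ∈ s, v j ^ 2 ≤ B) :
    ∑ j ∈ s, (u j + v j) ^ 2 ≤ (Real.sqrt A + Real.sqrt B) ^ 2 := by
  have hu : 0 ≤ ∑ j ∈ s, u j ^ 2 := Finset.sum_nonneg fun _ _ => sq_nonneg _
  have hv : 0 ≤ ∑ j ∈ s, v j ^ 2 := Finset.sum_nonneg fun _ _ => sq_nonneg _
  have hc := Real.sum_mul_le_sqrt_mul_sqrt s u v
  have hm : Real.sqrt (∑ j ∈ s, u j ^ 2) * Real.sqrt (∑ j ∈ s, v j ^ 2)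
      ≤ Real.sqrt A * Real.sqrt B :=
    mul_le_mul (Real.sqrt_le_sqrt hA) (Real.sqrt_le_sqrt hB) (Real.sqrt_nonneg _)
      (Real.sqrt_nonneg _)
  have e : ∑ j ∈ s, (u j + v j) ^ 2
      = ∑ j ∈ s, u j ^ 2 + 2 * ∑ j ∈ s, u j * v j + ∑ j ∈ s, v j ^ 2 := by
    rw [Finset.mul_sum, ← Finset.sum_add_distrib, ← Finset.sum_add_distrib]
    exact Finset.sum_congr rfl fun j _ => by ring
  have sA := Real.sq_sqrt (hu.trans hA)
  have sB := Real.sq_sqrt (hv.trans hB)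
  rw [e, add_sq, sA, sB]
  linarith

/-- Key spectral inequality for the monotonicity theorem: if E(G') ⊆ E(G), the exclusion
generators on G and G' (same rate) have equal kernels, and {ψⱼ}, {χⱼ} are orthonormal
eigenbases, then the high-frequency mass of f with respect to G' is controlled by the
spectral masses with respect to G. -/
theorem monotonicity_inequality {V : Type*} [Fintype V] [DecidableEq V]
    (G G' : SimpleGraph V) [DecidableRel G.Adj] [DecidableRel G'.Adj]
    (hG : G.Connected) (hG' : G'.Connected)
    (hsub : ∀ u v, G'.Adj u v → G.Adj u v)
    (α : ℝ) (hα : 0 < α)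
    (ψ χ : (V → Bool) → (V → Bool) → ℝ) (lam mu : (V → Bool) → ℝ)
    (heigψ : ∀ j x, negGen G α (ψ j) x = lam j * ψ j x)
    (heigχ : ∀ j x, negGen G' α (χ j) x = mu j * χ j x)
    (horthψ : ∀ i j, innerF (ψ i) (ψ j) = if i = j then 1 else 0)
    (horthχ : ∀ i j, innerF (χ i) (χ j) = if i = j then 1 else 0)
    (hker : Submodule.span ℝ {g | ∃ j, lam j = 0 ∧ g = ψ j}
          = Submodule.span ℝ {g | ∃ j, mu j = 0 ∧ g = χ j})
    (f : (V → Bool) → ℝ) (k k' : ℝ) (hk : 0 < k) (hk' : 0 < k') :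
    (∑ j, if k' < mu j then (innerF f (χ j)) ^ 2 else 0)
      ≤ (Real.sqrt ((k / k') *
            ∑ j, if 0 < lam j ∧ lam j ≤ k then (innerF f (ψ j)) ^ 2 else 0)
          + Real.sqrt (∑ j, if k < lam j then (innerF f (ψ j)) ^ 2 else 0)) ^ 2 := by
  have hlam := mi_eig_nonneg G α hα ψ lam heigψ horthψ
  have hmu := mi_eig_nonneg G' α hα χ mu heigχ horthχ
  set ca : (V → Bool) → ℝ := fun j => if 0 < lam j ∧ lam j ≤ k then innerF f (ψ j) else 0 with hca
  set cb : (V → Bool) → ℝ := fun j => if k < lam j then innerF f (ψ j) else 0 with hcb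
  set cc : (V → Bool) → ℝ := fun j => if lam j = 0 then innerF f (ψ j) else 0 with hcc
  set a : (V → Bool) → ℝ := fun x => ∑ j, ca j * ψ j x with ha
  set b : (V → Bool) → ℝ := fun x => ∑ j, cb j * ψ j x with hb
  set c : (V → Bool) → ℝ := fun x => ∑ j, cc j * ψ j x with hc
  have hsum : ∀ j, innerF f (ψ j) = ca j + cb j + cc j := by
    intro j
    have := hlam j
    simp only [hca, hcb, hcc]
    rcases this.eq_or_lt with h | h
    · rw [if_neg (by intro h'; linarith [h'.1]), if_neg (by linarith), if_pos h.symm]; ring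
    · by_cases h' : lam j ≤ k
      · rw [if_pos ⟨h, h'⟩, if_neg (by linarith), if_neg h.ne']; ring
      · rw [if_neg (by tauto), if_pos (by linarith), if_neg h.ne']; ring
  have hf : ∀ g, innerF f g = innerF a g + innerF b g + innerF c g := by
    intro g
    conv_lhs => rw [mi_expand ψ horthψ f]
    rw [ha, hb, hc]
    simp only [mi_innerF_sum_left]
    rw [← Finset.sum_add_distrib, ← Finset.sum_add_distrib]
    exact Finset.sum_congr rfl fun j _ => by rw [hsum]; ring
  have hcspan : c ∈ Submodule.span ℝ {g | ∃ j, mu j = 0 ∧ g = χ j} := by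
    rw [← hker]
    have : c = ∑ j, cc j • ψ j := by
      funext x
      simp [hc]
    rw [this]
    refine Submodule.sum_mem _ fun j _ => ?_
    by_cases h : lam j = 0
    · exact Submodule.smul_mem _ _ (Submodule.subset_span ⟨j, h, rfl⟩)
    · simp [hcc, h]
  have hcχ : ∀ i, 0 < mu i → innerF c (χ i) = 0 := by
    intro i hi
    refine Submodule.span_induction (p := fun g _ => innerF g (χ i) = 0) ?_ ?_ ?_ ?_ hcspan
    · rintro g ⟨j, hj, rfl⟩
      rw [horthχ, if_neg]
      rintro rfl
      exact hi.ne' hj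
    · simp [innerF]
    · intro g g' _ _ h h'
      have : innerF (g + g') (χ i) = innerF g (χ i) + innerF g' (χ i) := by
        simp [innerF, add_mul, Finset.sum_add_distrib, mul_add]
      rw [this, h, h', add_zero]
    · intro r g _ h
      have : innerF (r • g) (χ i) = r * innerF g (χ i) := by
        simp only [innerF, Pi.smul_apply, smul_eq_mul, Finset.mul_sum]
        exact Finset.sum_congr rfl fun x _ => by ring
      rw [this, h, mul_zero]
  rw [← Finset.sum_filter]
  have hL : ∑ j ∈ Finset.univ.filter (fun j => k' < mu j), innerF f (χ j) ^ 2
      = ∑ j ∈ Finset.univ.filter (fun j => k' < mu j), (innerF a (χ j) + innerF b (χ j)) ^ 2 := by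
    refine Finset.sum_congr rfl fun j hj => ?_
    rw [hf, hcχ j (hk'.trans (Finset.mem_filter.mp hj).2), add_zero]
  rw [hL]
  apply mi_minkowski
  · have h1 : k' * ∑ j ∈ Finset.univ.filter (fun j => k' < mu j), innerF a (χ j) ^ 2
        ≤ innerF (negGen G' α a) a := by
      rw [mi_energy G' α χ mu heigχ horthχ, Finset.mul_sum]
      refine (Finset.sum_le_sum (g := fun j => mu j * innerF a (χ j) ^ 2) fun j hj => ?_).trans
        (Finset.sum_le_sum_of_subset_of_nonneg (Finset.filter_subset _ _)
          fun j _ _ => mul_nonneg (hmu j) (sq_nonneg _))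
      exact mul_le_mul_of_nonneg_right (Finset.mem_filter.mp hj).2.le (sq_nonneg _)
    have h2 := mi_dir_mono G G' hsub α hα a
    have h3 : innerF (negGen G α a) a
        ≤ k * ∑ j, if 0 < lam j ∧ lam j ≤ k then (innerF f (ψ j)) ^ 2 else 0 := by
      rw [mi_energy G α ψ lam heigψ horthψ, Finset.mul_sum]
      refine Finset.sum_le_sum fun j _ => ?_
      rw [ha, mi_coeff ψ horthψ]
      simp only [hca]
      split_ifs with h
      · exact mul_le_mul_of_nonneg_right h.2 (sq_nonneg _)
      · simp
    rw [div_mul_eq_mul_div, le_div_iff₀ hk']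
    linarith
  · have h1 : ∑ j ∈ Finset.univ.filter (fun j => k' < mu j), innerF b (χ j) ^ 2 ≤ innerF b b := by
      rw [mi_parseval χ horthχ b]
      exact Finset.sum_le_sum_of_subset_of_nonneg (Finset.filter_subset _ _)
          fun j _ _ => sq_nonneg _
    refine h1.trans (le_of_eq ?_)
    rw [mi_parseval ψ horthψ b]
    refine Finset.sum_congr rfl fun j _ => ?_
    rw [hb, mi_coeff ψ horthψ]
    simp only [hcb]
    split_ifs <;> simp
end
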